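/- arXiv:1812.10248 — 3 statements merged into one kernel-verified Lean document; each statement's English description precedes it below -/
import Mathlib

section
/- Let φ = (φ_1,…,φ_N): B_N → B_N be holomorphic. Then the identity 1 − log(1 − Σ_j φ_j(z)·w_j) = 1 − log(1 − Σ_j z_j·φ_j(w)) holds for all z,w ∈ B_N if and only if there exists a symmetric N×N complex matrix M (Mᵀ = M) such that φ(z) = Mz for all z ∈ B_N; in that case M = φ'(0) and the operator norm of M is at most 1. -/
open ComplexConjugate

/-- The open unit ball of `ℂ^N` (Euclidean norm). -/
def unitBall (N : ℕ) : Set (Fin N → ℂ) := {z | ∑ j, ‖z j‖ ^ 2 < 1}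

/-- The Jacobian matrix `φ'(0)`, with `(i, j)` entry `(∂φ_i/∂z_j)(0)`. -/
noncomputable def jac0 (N : ℕ) (φ : (Fin N → ℂ) → Fin N → ℂ) :
    Matrix (Fin N) (Fin N) ℂ :=
  Matrix.of fun i j => fderiv ℂ φ 0 (Pi.single j 1) i

theorem isOpen_unitBall (N : ℕ) : IsOpen (unitBall N) :=
  isOpen_lt (by fun_prop) continuous_const

theorem mem_unitBall_iff_norm_toLp {N : ℕ} {z : Fin N → ℂ} :
    z ∈ unitBall N ↔ ‖WithLp.toLp 2 z‖ < 1 := by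
  rw [← sq_lt_one_iff₀ (norm_nonneg _), EuclideanSpace.norm_sq_eq]
  rfl

theorem zero_mem_unitBall (N : ℕ) : (0 : Fin N → ℂ) ∈ unitBall N := by
  simp [unitBall]

theorem single_half_mem_unitBall {N : ℕ} (k : Fin N) :
    (Pi.single k (1 / 2) : Fin N → ℂ) ∈ unitBall N := by
  have h : ‖WithLp.toLp 2 (Pi.single k (1 / 2) : Fin N → ℂ)‖ = ‖(1 / 2 : ℂ)‖ :=
    PiLp.norm_single 2 (fun _ => ℂ) k (1 / 2)
  rw [mem_unitBall_iff_norm_toLp, h]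
  norm_num

theorem norm_sum_mul_lt_one {N : ℕ} {z w : Fin N → ℂ}
    (hz : z ∈ unitBall N) (hw : w ∈ unitBall N) : ‖∑ j, z j * w j‖ < 1 := by
  have hz' : ∑ j, ‖z j‖ ^ 2 < 1 := hz
  have hw' : ∑ j, ‖w j‖ ^ 2 < 1 := hw
  have hsum : ‖∑ j, z j * w j‖ ≤ ∑ j, (‖z j‖ ^ 2 + ‖w j‖ ^ 2) / 2 := by
    refine norm_sum_le_of_le _ fun j _ => ?_
    rw [norm_mul]
    nlinarith [sq_nonneg (‖z j‖ - ‖w j‖)]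
  rw [← Finset.sum_div, Finset.sum_add_distrib] at hsum
  linarith

theorem one_sub_sum_mul_ne_zero {N : ℕ} {z w : Fin N → ℂ}
    (hz : z ∈ unitBall N) (hw : w ∈ unitBall N) : 1 - ∑ j, z j * w j ≠ 0 := by
  intro h
  have hlt := norm_sum_mul_lt_one hz hw
  rw [← sub_eq_zero.mp h] at hlt
  simp at hlt

/-- The kernel identity is equivalent to symmetry of `φ` for the bilinear form `∑ j, z j * w j`. -/
theorem log_identity_iff {N : ℕ} {φ : (Fin N → ℂ) → Fin N → ℂ}
    (hmap : ∀ z ∈ unitBall N, φ z ∈ unitBall N) {z w : Fin N → ℂ}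
    (hz : z ∈ unitBall N) (hw : w ∈ unitBall N) :
    1 - Complex.log (1 - ∑ j, φ z j * w j) = 1 - Complex.log (1 - ∑ j, z j * φ w j) ↔
      ∑ j, φ z j * w j = ∑ j, z j * φ w j := by
  refine ⟨fun h => ?_, fun h => by rw [h]⟩
  have hlog := congrArg Complex.exp (sub_right_injective h)
  rw [Complex.exp_log (one_sub_sum_mul_ne_zero (hmap z hz) hw),
    Complex.exp_log (one_sub_sum_mul_ne_zero hz (hmap w hw))] at hlog
  exact sub_right_injective hlog

theorem exists_symmetric_matrix {N : ℕ} {φ : (Fin N → ℂ) → Fin N → ℂ}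
    (h : ∀ z ∈ unitBall N, ∀ w ∈ unitBall N, ∑ j, φ z j * w j = ∑ j, z j * φ w j) :
    ∃ M : Matrix (Fin N) (Fin N) ℂ, M.transpose = M ∧
      ∀ z ∈ unitBall N, φ z = M.mulVec z := by
  have hcoord : ∀ z ∈ unitBall N, ∀ k,
      φ z k * (1 / 2) = ∑ j, z j * φ (Pi.single k (1 / 2)) j := by
    intro z hz k
    rw [← h z hz _ (single_half_mem_unitBall k)]
    simp [Pi.single_apply]
  refine ⟨Matrix.of fun k j => 2 * φ (Pi.single k (1 / 2)) j, ?_, fun z hz => ?_⟩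
  · ext j k
    have hjk := hcoord _ (single_half_mem_unitBall j) k
    simp only [Pi.single_apply, ite_mul, zero_mul, Finset.sum_ite_eq',
      Finset.mem_univ, if_true] at hjk
    simp only [Matrix.transpose_apply, Matrix.of_apply]
    linear_combination (-4) * hjk
  · ext k
    simp only [Matrix.mulVec, dotProduct, Matrix.of_apply]
    calc φ z k = 2 * (φ z k * (1 / 2)) := by ring
      _ = ∑ j, 2 * φ (Pi.single k (1 / 2)) j * z j := by
        rw [hcoord z hz k, Finset.mul_sum]
        exact Finset.sum_congr rfl fun j _ => by ring

theorem sum_mulVec_mul_of_transpose_eq {N : ℕ} {M : Matrix (Fin N) (Fin N) ℂ}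
    (hM : M.transpose = M) (z w : Fin N → ℂ) :
    ∑ j, M.mulVec z j * w j = ∑ j, z j * M.mulVec w j := by
  change M.mulVec z ⬝ᵥ w = z ⬝ᵥ M.mulVec w
  rw [Matrix.dotProduct_mulVec, ← Matrix.mulVec_transpose, hM]

theorem eq_jac0_of_eqOn_mulVec {N : ℕ} {φ : (Fin N → ℂ) → Fin N → ℂ}
    {M : Matrix (Fin N) (Fin N) ℂ} (h : ∀ z ∈ unitBall N, φ z = M.mulVec z) :
    M = jac0 N φ := by
  have heq : φ =ᶠ[nhds 0] LinearMap.toContinuousLinearMap M.mulVecLin := by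
    filter_upwards [(isOpen_unitBall N).mem_nhds (zero_mem_unitBall N)] with z hz
    simpa using h z hz
  ext i j
  have hfderiv := heq.fderiv_eq.trans (ContinuousLinearMap.fderiv _)
  simp [jac0, hfderiv]

theorem norm_toEuclideanLin_le_one {N : ℕ} {M : Matrix (Fin N) (Fin N) ℂ}
    (h : ∀ z ∈ unitBall N, M.mulVec z ∈ unitBall N) :
    ‖LinearMap.toContinuousLinearMap (Matrix.toEuclideanLin M)‖ ≤ 1 := by
  refine ContinuousLinearMap.opNorm_le_bound _ zero_le_one fun x => ?_
  rw [one_mul]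
  refine le_of_forall_gt_imp_ge_of_dense fun r hr => ?_
  have hr0 : 0 < r := (norm_nonneg x).trans_lt hr
  have hnorm : ‖((r : ℂ)⁻¹)‖ = r⁻¹ := by simp [abs_of_pos hr0]
  have hball : WithLp.ofLp ((r : ℂ)⁻¹ • x) ∈ unitBall N := by
    rw [mem_unitBall_iff_norm_toLp, WithLp.toLp_ofLp, norm_smul, hnorm, inv_mul_lt_iff₀ hr0]
    simpa using hr
  have himage : ‖Matrix.toEuclideanLin M ((r : ℂ)⁻¹ • x)‖ < 1 :=
    mem_unitBall_iff_norm_toLp.mp (h _ hball)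
  rw [map_smul, norm_smul, hnorm, inv_mul_lt_iff₀ hr0, mul_one] at himage
  exact himage.le

theorem stmt_3 (N : ℕ) (hN : 1 ≤ N)
    (φ : (Fin N → ℂ) → Fin N → ℂ)
    (hφ : DifferentiableOn ℂ φ (unitBall N))
    (hmap : ∀ z ∈ unitBall N, φ z ∈ unitBall N) :
    ((∀ z ∈ unitBall N, ∀ w ∈ unitBall N,
        1 - Complex.log (1 - ∑ j, φ z j * w j) =
          1 - Complex.log (1 - ∑ j, z j * φ w j)) ↔
      ∃ M : Matrix (Fin N) (Fin N) ℂ, M.transpose = M ∧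
        ∀ z ∈ unitBall N, φ z = M.mulVec z) ∧
    ((∀ z ∈ unitBall N, ∀ w ∈ unitBall N,
        1 - Complex.log (1 - ∑ j, φ z j * w j) =
          1 - Complex.log (1 - ∑ j, z j * φ w j)) →
      ∀ M : Matrix (Fin N) (Fin N) ℂ, M.transpose = M →
        (∀ z ∈ unitBall N, φ z = M.mulVec z) →
        M = jac0 N φ ∧
          ‖LinearMap.toContinuousLinearMap (Matrix.toEuclideanLin M)‖ ≤ 1) := by
  have hiff := fun z hz w hw => log_identity_iff hmap (z := z) (w := w) hz hw
  refine ⟨⟨fun h => ?_, ?_⟩, fun _ M _ hM => ⟨eq_jac0_of_eqOn_mulVec hM, ?_⟩⟩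
  · exact exists_symmetric_matrix fun z hz w hw => (hiff z hz w hw).mp (h z hz w hw)
  · rintro ⟨M, hsymm, hM⟩ z hz w hw
    rw [hiff z hz w hw, hM z hz, hM w hw]
    exact sum_mulVec_mul_of_transpose_eq hsymm z w
  · exact norm_toEuclideanLin_le_one fun z hz => hM z hz ▸ hmap z hz
end

section
/- Let ψ: B_N → ℂ and φ = (φ_1,…,φ_N): B_N → B_N be holomorphic and suppose the identity (†) holds: ψ(z)·(1 − log(1 − ⟨φ(z),w⟩)) = conj(ψ(w))·(1 − log(1 − ⟨z,φ(w)⟩)) for all z,w ∈ B_N. Then ψ(0) is a real number and ψ(z) = ψ(0)·(1 − log(1 − ⟨z,φ(0)⟩)) for all z ∈ B_N. If moreover ψ(0) ≠ 0, then for every k = 1,…,N and z ∈ B_N, φ_k(z) = φ_k(0) + (Σ_j conj((∂φ_j/∂z_k)(0))·z_j) / ((1 − ⟨z,φ(0)⟩)·(1 − log(1 − ⟨z,φ(0)⟩))), and the Jacobian matrix φ'(0) is Hermitian (φ'(0) equals its conjugate transpose). -/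
open ComplexConjugate

theorem norm_sum_mul_conj_lt_one {N : ℕ} {z w : Fin N → ℂ} (hz : z ∈ unitBall N)
    (hw : w ∈ unitBall N) : ‖∑ j, z j * conj (w j)‖ < 1 := by
  have hz' : ∑ j, ‖z j‖ ^ 2 < 1 := hz
  have hw' : ∑ j, ‖w j‖ ^ 2 < 1 := hw
  calc ‖∑ j, z j * conj (w j)‖ ≤ ∑ j, ‖z j * conj (w j)‖ := norm_sum_le _ _
    _ ≤ ∑ j, (‖z j‖ ^ 2 + ‖w j‖ ^ 2) / 2 := by
        refine Finset.sum_le_sum fun j _ => ?_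
        rw [norm_mul, RCLike.norm_conj]
        nlinarith [sq_nonneg (‖z j‖ - ‖w j‖)]
    _ = (∑ j, ‖z j‖ ^ 2 + ∑ j, ‖w j‖ ^ 2) / 2 := by
        rw [← Finset.sum_div, Finset.sum_add_distrib]
    _ < 1 := by linarith

theorem one_sub_mem_slitPlane {s : ℂ} (hs : ‖s‖ < 1) : 1 - s ∈ Complex.slitPlane := by
  left
  have := (Complex.re_le_norm s).trans_lt hs
  simp only [Complex.sub_re, Complex.one_re]
  linarith

theorem one_sub_log_one_sub_ne_zero {s : ℂ} (hs : ‖s‖ < 1) :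
    1 - Complex.log (1 - s) ≠ 0 := by
  intro h
  have hre : 1 - Real.log ‖1 - s‖ = 0 := by
    simpa [Complex.log_re] using congrArg Complex.re h
  have hpos : 0 < ‖1 - s‖ :=
    norm_pos_iff.2 (Complex.slitPlane_ne_zero (one_sub_mem_slitPlane hs))
  have hle : ‖1 - s‖ < 2 := by
    have := norm_sub_le 1 s
    rw [norm_one] at this
    linarith
  have := Real.log_lt_log hpos hle
  linarith [Real.log_two_lt_d9]

theorem HasDerivAt.one_sub_log_one_sub {f : ℝ → ℂ} {f' : ℂ} {x : ℝ} (hf : HasDerivAt f f' x)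
    (hx : ‖f x‖ < 1) :
    HasDerivAt (fun t => 1 - Complex.log (1 - f t)) (f' / (1 - f x)) x := by
  refine (((hf.const_sub 1).clog_real (one_sub_mem_slitPlane hx)).const_sub 1).congr_deriv ?_
  ring

theorem hasDerivAt_single_ofReal {N : ℕ} (k : Fin N) :
    HasDerivAt (fun t : ℝ => (Pi.single k (t : ℂ) : Fin N → ℂ)) (Pi.single k 1) 0 := by
  rw [hasDerivAt_pi]
  intro i
  by_cases h : i = k
  · subst h
    simpa using (hasDerivAt_id (0 : ℝ)).ofReal_comp
  · simpa [h] using hasDerivAt_const (0 : ℝ) (0 : ℂ)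

theorem eventually_single_ofReal_mem_unitBall {N : ℕ} (k : Fin N) :
    ∀ᶠ t : ℝ in nhds 0, (Pi.single k (t : ℂ) : Fin N → ℂ) ∈ unitBall N := by
  refine (hasDerivAt_single_ofReal k).continuousAt.eventually
    ((isOpen_unitBall N).mem_nhds ?_)
  simpa using zero_mem_unitBall N

theorem hasDerivAt_comp_single_ofReal {N : ℕ} {φ : (Fin N → ℂ) → Fin N → ℂ}
    (hφ : DifferentiableOn ℂ φ (unitBall N)) (j k : Fin N) :
    HasDerivAt (fun t : ℝ => φ (Pi.single k (t : ℂ)) j) (jac0 N φ j k) 0 := by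
  have hd : HasFDerivAt φ ((fderiv ℂ φ 0).restrictScalars ℝ)
      (Pi.single k ((0 : ℝ) : ℂ)) := by
    simpa using (hφ.differentiableAt
      ((isOpen_unitBall N).mem_nhds (zero_mem_unitBall N))).hasFDerivAt.restrictScalars ℝ
  exact hasDerivAt_pi.1 (hd.comp_hasDerivAt 0 (hasDerivAt_single_ofReal k)) j

theorem sum_mul_conj_single {N : ℕ} (z : Fin N → ℂ) (k : Fin N) (t : ℝ) :
    ∑ j, z j * conj ((Pi.single k (t : ℂ) : Fin N → ℂ) j) = z k * t := by
  rw [Finset.sum_eq_single k] <;> simp +contextual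

theorem hasDerivAt_one_sub_log_single {N : ℕ} (z : Fin N → ℂ) (k : Fin N) :
    HasDerivAt (fun t : ℝ => 1 - Complex.log
      (1 - ∑ j, z j * conj ((Pi.single k (t : ℂ) : Fin N → ℂ) j))) (z k) 0 := by
  simp only [sum_mul_conj_single]
  have h : HasDerivAt (fun t : ℝ => z k * (t : ℂ)) (z k) 0 := by
    simpa using (Complex.ofRealCLM.hasDerivAt (x := (0 : ℝ))).const_mul (z k)
  simpa using h.one_sub_log_one_sub (by simp)

theorem apply_mul_eq_of_hermitian_on_kernels {N : ℕ} {ψ : (Fin N → ℂ) → ℂ}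
    {φ : (Fin N → ℂ) → Fin N → ℂ}
    (hφ : DifferentiableOn ℂ φ (unitBall N))
    (hmap : ∀ z ∈ unitBall N, φ z ∈ unitBall N)
    (hdagger : ∀ z ∈ unitBall N, ∀ w ∈ unitBall N,
      ψ z * (1 - Complex.log (1 - ∑ j, φ z j * conj (w j))) =
        conj (ψ w) * (1 - Complex.log (1 - ∑ j, z j * conj (φ w j))))
    (k : Fin N) {z : Fin N → ℂ} (hz : z ∈ unitBall N) :
    ψ z * φ z k =
      ψ 0 * φ 0 k * (1 - Complex.log (1 - ∑ m, z m * conj (φ 0 m))) +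
        conj (ψ 0) * ((∑ j, conj (jac0 N φ j k) * z j) / (1 - ∑ m, z m * conj (φ 0 m))) := by
  have h0 := zero_mem_unitBall N
  have hψ_conj : ∀ w ∈ unitBall N,
      conj (ψ w) = ψ 0 * (1 - Complex.log (1 - ∑ j, φ 0 j * conj (w j))) := fun w hw => by
    simpa using (hdagger 0 h0 w hw).symm
  have hleft := (hasDerivAt_one_sub_log_single (φ z) k).const_mul (ψ z)
  have hψ' : HasDerivAt (fun t : ℝ => conj (ψ (Pi.single k (t : ℂ)))) (ψ 0 * φ 0 k) 0 := by
    refine ((hasDerivAt_one_sub_log_single (φ 0) k).const_mul (ψ 0)).congr_of_eventuallyEq ?_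
    filter_upwards [eventually_single_ofReal_mem_unitBall k] with t ht using hψ_conj _ ht
  have hinner : HasDerivAt (fun t : ℝ => ∑ j, z j * conj (φ (Pi.single k (t : ℂ)) j))
      (∑ j, conj (jac0 N φ j k) * z j) 0 := by
    refine HasDerivAt.fun_sum fun j _ => ?_
    rw [mul_comm]
    exact (hasDerivAt_comp_single_ofReal hφ j k).star.const_mul (z j)
  have hright := hψ'.mul (hinner.one_sub_log_one_sub (by
    simpa using norm_sum_mul_conj_lt_one hz (hmap 0 h0)))
  have heq := hleft.unique (hright.congr_of_eventuallyEq (by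
    filter_upwards [eventually_single_ofReal_mem_unitBall k] with t ht using hdagger z hz _ ht))
  simpa using heq

theorem stmt_4 (N : ℕ) (hN : 1 ≤ N)
    (ψ : (Fin N → ℂ) → ℂ) (φ : (Fin N → ℂ) → Fin N → ℂ)
    (hψ : DifferentiableOn ℂ ψ (unitBall N))
    (hφ : DifferentiableOn ℂ φ (unitBall N))
    (hmap : ∀ z ∈ unitBall N, φ z ∈ unitBall N)
    (hdagger : ∀ z ∈ unitBall N, ∀ w ∈ unitBall N,
      ψ z * (1 - Complex.log (1 - ∑ j, φ z j * conj (w j))) =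
        conj (ψ w) * (1 - Complex.log (1 - ∑ j, z j * conj (φ w j)))) :
    (ψ 0).im = 0 ∧
      (∀ z ∈ unitBall N,
        ψ z = ψ 0 * (1 - Complex.log (1 - ∑ m, z m * conj (φ 0 m)))) ∧
      (ψ 0 ≠ 0 →
        (∀ k : Fin N, ∀ z ∈ unitBall N,
          φ z k = φ 0 k +
            (∑ j, conj (jac0 N φ j k) * z j) /
              ((1 - ∑ m, z m * conj (φ 0 m)) *
                (1 - Complex.log (1 - ∑ m, z m * conj (φ 0 m))))) ∧
        (jac0 N φ).conjTranspose = jac0 N φ) := by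
  have h0 := zero_mem_unitBall N
  have hreal : conj (ψ 0) = ψ 0 := by simpa using (hdagger 0 h0 0 h0).symm
  have hψ_eq : ∀ z ∈ unitBall N,
      ψ z = ψ 0 * (1 - Complex.log (1 - ∑ m, z m * conj (φ 0 m))) := fun z hz => by
    simpa [hreal] using hdagger z hz 0 h0
  refine ⟨Complex.conj_eq_iff_im.1 hreal, hψ_eq, fun hne => ?_⟩
  have hφ_eq : ∀ k : Fin N, ∀ z ∈ unitBall N,
      φ z k = φ 0 k +
        (∑ j, conj (jac0 N φ j k) * z j) /
          ((1 - ∑ m, z m * conj (φ 0 m)) *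
            (1 - Complex.log (1 - ∑ m, z m * conj (φ 0 m)))) := by
    intro k z hz
    have hlt := norm_sum_mul_conj_lt_one hz (hmap 0 h0)
    have hlog := one_sub_log_one_sub_ne_zero hlt
    have hsub := Complex.slitPlane_ne_zero (one_sub_mem_slitPlane hlt)
    have key := apply_mul_eq_of_hermitian_on_kernels hφ hmap hdagger k hz
    rw [hψ_eq z hz, hreal] at key
    apply mul_left_cancel₀ (mul_ne_zero hne hlog)
    rw [key]
    generalize 1 - Complex.log (1 - ∑ m, z m * conj (φ 0 m)) = L at *
    generalize 1 - ∑ m, z m * conj (φ 0 m) = D at *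
    field_simp
  refine ⟨hφ_eq, ?_⟩
  ext k i
  rw [Matrix.conjTranspose_apply]
  have hnum : HasDerivAt
      (fun t : ℝ => ∑ j, conj (jac0 N φ j k) * (Pi.single i (t : ℂ) : Fin N → ℂ) j)
      (conj (jac0 N φ i k)) 0 := by
    refine (HasDerivAt.fun_sum (u := Finset.univ) fun j _ =>
      (hasDerivAt_pi.1 (hasDerivAt_single_ofReal i) j).const_mul
        (conj (jac0 N φ j k))).congr_deriv ?_
    simp [Pi.single_apply]
  have hsum : HasDerivAt
      (fun t : ℝ => ∑ m, (Pi.single i (t : ℂ) : Fin N → ℂ) m * conj (φ 0 m))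
      (∑ m, (Pi.single i 1 : Fin N → ℂ) m * conj (φ 0 m)) 0 :=
    HasDerivAt.fun_sum fun m _ =>
      (hasDerivAt_pi.1 (hasDerivAt_single_ofReal i) m).mul_const _
  have hden := (hsum.const_sub 1).mul (hsum.one_sub_log_one_sub (by simp))
  have hquot := (hnum.div hden (by simp)).const_add (φ 0 k)
  have heq := (hasDerivAt_comp_single_ofReal hφ k i).unique (hquot.congr_of_eventuallyEq (by
    filter_upwards [eventually_single_ofReal_mem_unitBall i] with t ht using hφ_eq k _ ht))
  rw [heq]
  simp
end

section
/- Let A be a symmetric N×N complex matrix (Aᵀ = A), λ ∈ ℂ, and b ∈ ℝ^N with 0 < |b| < 1 and A·b = λ·b. Set c = (I_N − A)·b and T = √(1−|b|²)·I_N + (1 − √(1−|b|²))·(b·bᵀ)/|b|². Then for all z,w ∈ ℂ^N: (1 − ⟨b, conj(Az+c)⟩ − ⟨w, b − T·conj(Az+c)⟩)^N = (1 − ⟨b, z̄⟩ − ⟨c, b⟩ + ⟨c, T·z̄⟩ − ⟨Aw, b⟩ + ⟨Aw, T·z̄⟩)^N, where ⟨u,v⟩ = Σ_j u_j·conj(v_j),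 conj(·) and z̄ denote entrywise complex conjugation, and b·bᵀ has entries b_i·b_j. -/
open ComplexConjugate

/-- The real vector `b ∈ ℝ^N` viewed in `ℂ^N`. -/
def bC (N : ℕ) (b : Fin N → ℝ) : Fin N → ℂ := fun i => (b i : ℂ)

/-- `T = √(1−|b|²)·I_N + (1 − √(1−|b|²))·(b·bᵀ)/|b|²`, the self-adjoint linear
part of the involutive automorphism `φ_b` of the unit ball. -/
noncomputable def Tb (N : ℕ) (b : Fin N → ℝ) : Matrix (Fin N) (Fin N) ℂ :=
  (Real.sqrt (1 - ∑ i, b i ^ 2) : ℂ) • (1 : Matrix (Fin N) (Fin N) ℂ) +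
    (((1 - Real.sqrt (1 - ∑ i, b i ^ 2)) / ∑ i, b i ^ 2 : ℝ) : ℂ) •
      Matrix.vecMulVec (bC N b) (bC N b)

open Matrix in
/-- The matrix `Tb` acts by `v ↦ σ v + κ (b ⬝ v) b`. -/
theorem Tb_mulVec (N : ℕ) (b : Fin N → ℝ) (v : Fin N → ℂ) :
    Tb N b *ᵥ v = (Real.sqrt (1 - ∑ i, b i ^ 2) : ℂ) • v +
      ((((1 - Real.sqrt (1 - ∑ i, b i ^ 2)) / ∑ i, b i ^ 2 : ℝ) : ℂ) * (bC N b ⬝ᵥ v)) •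
        bC N b := by
  simp [Tb, add_mulVec, smul_mulVec, vecMulVec_mulVec, smul_smul]

theorem conj_bC (N : ℕ) (b : Fin N → ℝ) (j : Fin N) : conj (bC N b j) = bC N b j :=
  Complex.conj_ofReal _

open Matrix in
/-- `Tb` is a real matrix, so it commutes with entrywise conjugation. -/
theorem conj_Tb_mulVec_star (N : ℕ) (b : Fin N → ℝ) (v : Fin N → ℂ) (j : Fin N) :
    conj ((Tb N b *ᵥ star v) j) = (Tb N b *ᵥ v) j := by
  simp [Tb_mulVec, dotProduct, conj_bC]

open Matrix in
theorem bC_dotProduct_self (N : ℕ) (b : Fin N → ℝ) :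
    bC N b ⬝ᵥ bC N b = ((∑ i, b i ^ 2 : ℝ) : ℂ) := by
  simp [bC, dotProduct, sq]

open Matrix in
/-- `b` is a fixed vector of `Tb`. -/
theorem Tb_mulVec_bC (N : ℕ) (b : Fin N → ℝ) (hb : ∑ i, b i ^ 2 ≠ 0) :
    Tb N b *ᵥ bC N b = bC N b := by
  rw [Tb_mulVec, bC_dotProduct_self, ← Complex.ofReal_mul, div_mul_cancel₀ _ hb, ← add_smul]
  simp

theorem stmt_15 (N : ℕ) (A : Matrix (Fin N) (Fin N) ℂ) (hA : A.transpose = A)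
    (lam : ℂ) (b : Fin N → ℝ)
    (hb0 : 0 < ∑ i, b i ^ 2) (hb1 : ∑ i, b i ^ 2 < 1)
    (hAb : A.mulVec (bC N b) = fun i => lam * bC N b i) :
    ∀ z w : Fin N → ℂ,
      (1 - (∑ j, bC N b j * conj (star (A.mulVec z + (1 - A).mulVec (bC N b)) j)) -
          ∑ j, w j *
            conj (bC N b j -
              (Tb N b).mulVec (star (A.mulVec z + (1 - A).mulVec (bC N b))) j)) ^ N =
      (1 - (∑ j, bC N b j * conj (star z j)) -
          (∑ j, (1 - A).mulVec (bC N b) j * conj (bC N b j)) +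
          (∑ j, (1 - A).mulVec (bC N b) j * conj ((Tb N b).mulVec (star z) j)) -
          (∑ j, A.mulVec w j * conj (bC N b j)) +
          (∑ j, A.mulVec w j * conj ((Tb N b).mulVec (star z) j))) ^ N := by
  intro z w
  congr 1
  have hc : (1 - A).mulVec (bC N b) = (1 - lam) • bC N b := by
    rw [Matrix.sub_mulVec, hAb, Matrix.one_mulVec, sub_smul, one_smul]
    rfl
  have hsymm (u v : Fin N → ℂ) : A.mulVec u ⬝ᵥ v = u ⬝ᵥ A.mulVec v := by
    rw [Matrix.dotProduct_mulVec, ← Matrix.mulVec_transpose, hA]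
  have heig (v : Fin N → ℂ) : bC N b ⬝ᵥ A.mulVec v = lam * (bC N b ⬝ᵥ v) := by
    rw [← hsymm, hAb]
    exact smul_dotProduct lam (bC N b) v
  simp only [map_sub, conj_Tb_mulVec_star, conj_bC, hc, mul_sub,
    Finset.sum_sub_distrib]
  simp only [Pi.star_apply, starRingEnd_apply, star_star]
  change 1 - bC N b ⬝ᵥ (A.mulVec z + (1 - lam) • bC N b) -
      (w ⬝ᵥ bC N b - w ⬝ᵥ (Tb N b).mulVec (A.mulVec z + (1 - lam) • bC N b)) =
    1 - bC N b ⬝ᵥ z - ((1 - lam) • bC N b) ⬝ᵥ bC N b +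
      ((1 - lam) • bC N b) ⬝ᵥ (Tb N b).mulVec z - A.mulVec w ⬝ᵥ bC N b +
      A.mulVec w ⬝ᵥ (Tb N b).mulVec z
  have hT (v : Fin N → ℂ) : bC N b ⬝ᵥ (Tb N b).mulVec v = bC N b ⬝ᵥ v := by
    have hTb := congrArg (· ⬝ᵥ v) (Tb_mulVec_bC N b hb0.ne')
    simp only [Tb_mulVec, add_dotProduct, smul_dotProduct, smul_eq_mul] at hTb
    simp only [Tb_mulVec, dotProduct_add, dotProduct_smul, smul_eq_mul]
    linear_combination hTb
  have hw : A.mulVec w ⬝ᵥ bC N b = lam * (w ⬝ᵥ bC N b) := by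
    rw [dotProduct_comm, heig, dotProduct_comm]
  rw [Matrix.mulVec_add, Matrix.mulVec_smul, Tb_mulVec_bC N b hb0.ne',
    smul_dotProduct _ _ ((Tb N b).mulVec z), hT]
  simp only [dotProduct_add, dotProduct_smul, smul_dotProduct, smul_eq_mul, heig, hw, Tb_mulVec,
    hsymm w z]
  ring
end
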